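/- For d ≥ 3 and a natural number s > d/2, there exists a constant K such that for all u₁, u₂ ∈ H^s(ℝᵈ), ‖u₁u₂‖_{H^s} ≤ K‖∇u₁‖_{H^{s-1}}‖u₂‖_{H^s}. That is, the product can be estimated using only the gradient of the first factor in H^{s-1}, not u₁ itself in H^s. -/

import Mathlib

open MeasureTheory SchwartzMap
open scoped FourierTransform Real

noncomputable section

abbrev Euc (d : ℕ) := EuclideanSpace ℝ (Fin d)

/-- Square of the `H^s` norm via the Fourier transform. -/
def hNormSq (d : ℕ) (s : ℝ) (u : Euc d → ℂ) : ℝ :=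
  ∫ ξ : Euc d, (1 + ‖ξ‖ ^ 2) ^ s * ‖𝓕 u ξ‖ ^ 2

def hNorm (d : ℕ) (s : ℝ) (u : Euc d → ℂ) : ℝ := Real.sqrt (hNormSq d s u)

/-- `i`-th partial derivative. -/
def pd (d : ℕ) (i : Fin d) (u : Euc d → ℂ) : Euc d → ℂ :=
  fun x => fderiv ℝ u x (EuclideanSpace.single i 1)

/-- `H^s` norm of the full gradient of a scalar function. -/
def gradHNorm (d : ℕ) (s : ℝ) (u : Euc d → ℂ) : ℝ :=
  Real.sqrt (∑ i, hNormSq d s (pd d i u))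

/-!
On the Fourier side the product becomes the convolution of `û₁` and `û₂`. The weight
`⟨ξ⟩ = (1 + |ξ|²)^{1/2}` satisfies `⟨ξ⟩ ≤ |η| + ⟨ξ - η⟩`, hence `⟨ξ⟩^s ≲ |η|^s + ⟨ξ - η⟩^s`: only
the homogeneous weight falls on `û₁`. Young's inequality `L¹ * L² ⊆ L²` bounds the two terms by
`‖|·|^s û₁‖₂ ‖û₂‖₁` and `‖û₁‖₁ ‖⟨·⟩^s û₂‖₂`. By Cauchy–Schwarz, `‖û₂‖₁` is controlled by the `H^s`
norm of `u₂`, since `⟨ξ⟩^{-s}` is square integrable for `s > d / 2`, while `‖û₁‖₁` is controlled by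
the `H^{s-1}` norm of `∇u₁` alone, since so is `|ξ|^{-1} ⟨ξ⟩^{-(s-1)}`; its singularity at the
origin is where `d ≥ 3` enters.
-/

open Set Filter Module Asymptotics
open scoped ENNReal NNReal Topology

theorem ofReal_sqrt_of_ofReal_eq_sq {r : ℝ} {x : ℝ≥0∞} (h : ENNReal.ofReal r = x ^ 2) :
    ENNReal.ofReal √r = x := by
  rw [← (ENNReal.pow_right_strictMono two_ne_zero).injective.eq_iff, ← h,
    ← ENNReal.ofReal_pow (Real.sqrt_nonneg r), Real.sq_sqrt', ENNReal.ofReal_max,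
    ENNReal.ofReal_zero, max_eq_left zero_le]

section Lebesgue

variable {α : Type*} [MeasurableSpace α] {μ : Measure α}

theorem rpow_lintegral_mul_le {p : ℝ} (hp : 1 ≤ p) {f g : α → ℝ≥0∞} (hf : Measurable f)
    (hg : Measurable g) :
    (∫⁻ x, f x * g x ∂μ) ^ p ≤ (∫⁻ x, f x ∂μ) ^ (p - 1) * ∫⁻ x, f x * g x ^ p ∂μ := by
  have hp₀ : 0 < p := by positivity
  have jensen := eLpNorm'_le_eLpNorm'_mul_rpow_measure_univ one_pos hp
    (μ := μ.withDensity f) hg.aestronglyMeasurable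
  simp only [eLpNorm'_eq_lintegral_enorm, enorm_eq_self, ENNReal.rpow_one, div_one,
    lintegral_withDensity_eq_lintegral_mul _ hf hg,
    lintegral_withDensity_eq_lintegral_mul _ hf (hg.pow_const p), Pi.mul_apply,
    withDensity_apply _ MeasurableSet.univ, setLIntegral_univ] at jensen
  calc (∫⁻ x, f x * g x ∂μ) ^ p
    _ ≤ ((∫⁻ x, f x * g x ^ p ∂μ) ^ (1 / p) * (∫⁻ x, f x ∂μ) ^ (1 - 1 / p)) ^ p := by gcongr
    _ = (∫⁻ x, f x ∂μ) ^ (p - 1) * ∫⁻ x, f x * g x ^ p ∂μ := by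
      rw [ENNReal.mul_rpow_of_nonneg _ _ hp₀.le, ← ENNReal.rpow_mul, ← ENNReal.rpow_mul, sub_mul,
        one_div_mul_cancel hp₀.ne', ENNReal.rpow_one, one_mul, mul_comm]

theorem lintegral_le_eLpNorm_inv_mul_eLpNorm {p q : ℝ≥0} (hpq : p.HolderConjugate q)
    {w f : α → ℝ≥0∞} (hw : Measurable w) (hf : Measurable f) (hw₀ : ∀ᵐ x ∂μ, w x ≠ 0)
    (hw_top : ∀ᵐ x ∂μ, w x ≠ ∞) :
    ∫⁻ x, f x ∂μ ≤ eLpNorm (fun x ↦ (w x)⁻¹) p μ * eLpNorm (fun x ↦ w x * f x) q μ := by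
  calc ∫⁻ x, f x ∂μ
    _ = ∫⁻ x, (w x)⁻¹ * (w x * f x) ∂μ := by
      refine lintegral_congr_ae ?_
      filter_upwards [hw₀, hw_top] with x h₀ h_top
      rw [← mul_assoc, ENNReal.inv_mul_cancel h₀ h_top, one_mul]
    _ ≤ _ := by
      simpa [eLpNorm_nnreal_eq_lintegral hpq.ne_zero, eLpNorm_nnreal_eq_lintegral hpq.symm.ne_zero]
        using ENNReal.lintegral_mul_le_Lp_mul_Lq μ hpq.coe hw.inv.aemeasurable
          (hw.mul hf).aemeasurable

theorem eLpNorm_two_sq (f : α → ℝ≥0∞) : eLpNorm f 2 μ ^ 2 = ∫⁻ x, f x ^ 2 ∂μ := by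
  simpa using eLpNorm_nnreal_pow_eq_lintegral (f := f) (μ := μ) (two_ne_zero (α := ℝ≥0))

end Lebesgue

section LConvolution

variable {G : Type*} [MeasurableSpace G] {μ : Measure G}

theorem eLpNorm_lconvolution_le [AddGroup G] [MeasurableAdd₂ G] [MeasurableNeg G] [SFinite μ]
    [μ.IsAddLeftInvariant] {p : ℝ≥0} (hp : 1 ≤ p) {f g : G → ℝ≥0∞} (hf : Measurable f)
    (hg : Measurable g) :
    eLpNorm (f ⋆ₗ[μ] g) p μ ≤ (∫⁻ x, f x ∂μ) * eLpNorm g p μ := by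
  have hp₀ : p ≠ 0 := by positivity
  have hp' : (1 : ℝ) ≤ p := mod_cast hp
  rw [← ENNReal.rpow_le_rpow_iff (z := p) (by positivity),
    ENNReal.mul_rpow_of_nonneg _ _ p.coe_nonneg, eLpNorm_nnreal_pow_eq_lintegral hp₀,
    eLpNorm_nnreal_pow_eq_lintegral hp₀]
  simp only [enorm_eq_self]
  calc ∫⁻ x, (f ⋆ₗ[μ] g) x ^ (p : ℝ) ∂μ
    _ ≤ ∫⁻ x, (∫⁻ y, f y ∂μ) ^ (p - 1 : ℝ) * ∫⁻ y, f y * g (-y + x) ^ (p : ℝ) ∂μ ∂μ :=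
      lintegral_mono fun x ↦ rpow_lintegral_mul_le hp' hf (by fun_prop)
    _ = (∫⁻ y, f y ∂μ) ^ (p - 1 : ℝ) * ∫⁻ y, ∫⁻ x, f y * g (-y + x) ^ (p : ℝ) ∂μ ∂μ := by
      rw [lintegral_const_mul _ (by fun_prop), lintegral_lintegral_swap (by fun_prop)]
    _ = (∫⁻ y, f y ∂μ) ^ (p - 1 : ℝ) * ((∫⁻ y, f y ∂μ) * ∫⁻ x, g x ^ (p : ℝ) ∂μ) := by
      congr 1
      rw [← lintegral_mul_const _ hf]
      refine lintegral_congr fun y ↦ ?_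
      rw [lintegral_const_mul _ (by fun_prop),
        lintegral_add_left_eq_self (fun x ↦ g x ^ (p : ℝ)) (-y)]
    _ = (∫⁻ y, f y ∂μ) ^ (p : ℝ) * ∫⁻ x, g x ^ (p : ℝ) ∂μ := by
      rw [← mul_assoc]
      congr 1
      conv_lhs => enter [2]; rw [← ENNReal.rpow_one (∫⁻ y, f y ∂μ)]
      rw [← ENNReal.rpow_add_of_nonneg _ _ (by linarith) zero_le_one, sub_add_cancel]

variable [AddCommGroup G] [MeasurableAdd₂ G] [MeasurableNeg G]

theorem rpow_mul_lconvolution_le {s : ℝ} (hs : 1 ≤ s) {v w : G → ℝ≥0∞} (hv : Measurable v)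
    (hw : Measurable w) (hvw : ∀ x y, w (x + y) ≤ v x + w y) {f g : G → ℝ≥0∞} (hf : Measurable f)
    (hg : Measurable g) (x : G) :
    w x ^ s * (f ⋆ₗ[μ] g) x ≤ 2 ^ (s - 1) *
      (((fun y ↦ v y ^ s * f y) ⋆ₗ[μ] g) x + (f ⋆ₗ[μ] fun y ↦ w y ^ s * g y) x) := by
  have weight_le (y : G) : w x ^ s ≤ 2 ^ (s - 1) * (v y ^ s + w (-y + x) ^ s) := by
    calc w x ^ s
      _ ≤ (v y + w (-y + x)) ^ s := by
        gcongr
        simpa using hvw y (-y + x)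
      _ ≤ _ := ENNReal.rpow_add_le_mul_rpow_add_rpow _ _ hs
  simp only [lconvolution_def]
  rw [← lintegral_add_left (by fun_prop), ← lintegral_const_mul _ (by fun_prop),
    ← lintegral_const_mul _ (by fun_prop)]
  refine lintegral_mono fun y ↦ ?_
  calc w x ^ s * (f y * g (-y + x))
    _ ≤ 2 ^ (s - 1) * (v y ^ s + w (-y + x) ^ s) * (f y * g (-y + x)) := by
      gcongr
      exact weight_le y
    _ = _ := by ring

theorem eLpNorm_rpow_mul_lconvolution_le [SFinite μ] [μ.IsAddLeftInvariant]
    [μ.IsNegInvariant] {p : ℝ≥0} (hp : 1 ≤ p) {s : ℝ} (hs : 1 ≤ s) {v w : G → ℝ≥0∞}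
    (hv : Measurable v) (hw : Measurable w) (hvw : ∀ x y, w (x + y) ≤ v x + w y)
    {f g : G → ℝ≥0∞} (hf : Measurable f) (hg : Measurable g) :
    eLpNorm (fun x ↦ w x ^ s * (f ⋆ₗ[μ] g) x) p μ ≤ 2 ^ (s - 1) *
      ((∫⁻ x, g x ∂μ) * eLpNorm (fun x ↦ v x ^ s * f x) p μ +
        (∫⁻ x, f x ∂μ) * eLpNorm (fun x ↦ w x ^ s * g x) p μ) := by
  have hvf : Measurable fun x ↦ v x ^ s * f x := by fun_prop
  have hwg : Measurable fun x ↦ w x ^ s * g x := by fun_prop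
  set F := (fun x ↦ v x ^ s * f x) ⋆ₗ[μ] g with hF
  set H := f ⋆ₗ[μ] fun x ↦ w x ^ s * g x
  have hFm : Measurable F := measurable_lconvolution μ hvf hg
  have hHm : Measurable H := measurable_lconvolution μ hf hwg
  calc eLpNorm (fun x ↦ w x ^ s * (f ⋆ₗ[μ] g) x) p μ
    _ ≤ 2 ^ (s - 1) * eLpNorm (F + H) p μ := by
      refine eLpNorm_le_mul_eLpNorm_of_ae_le_mul'' p
        (hFm.add hHm).aestronglyMeasurable (.of_forall fun x ↦ ?_)
      exact rpow_mul_lconvolution_le hs hv hw hvw hf hg x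
    _ ≤ 2 ^ (s - 1) * (eLpNorm F p μ + eLpNorm H p μ) := by
      gcongr
      exact eLpNorm_add_le hFm.aestronglyMeasurable hHm.aestronglyMeasurable (mod_cast hp)
    _ ≤ _ := by
      gcongr
      · rw [hF, lconvolution_comm]
        exact eLpNorm_lconvolution_le hp hg hvf
      · exact eLpNorm_lconvolution_le hp hf hwg

end LConvolution

section Weights

theorem integrableOn_Ioi_rpow_mul_rpow_one_add_sq {b c : ℝ} (hc : 0 < c) (hcb : c < 2 * b) :
    IntegrableOn (fun r : ℝ ↦ r ^ (c - 1) * (1 + r ^ 2) ^ (-b)) (Ioi 0) := by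
  have hcont : Continuous fun r : ℝ ↦ (1 + r ^ 2) ^ (-b) :=
    Continuous.rpow_const (by fun_prop) fun r ↦ Or.inl (by positivity)
  have htop : (fun r : ℝ ↦ (1 + r ^ 2) ^ (-b)) =O[atTop] (· ^ (-(2 * b))) := by
    refine .of_norm_eventuallyLE ?_
    filter_upwards [eventually_gt_atTop 0] with r hr
    rw [Real.norm_of_nonneg (by positivity), ← mul_neg, Real.rpow_mul hr.le, Real.rpow_two]
    exact Real.rpow_le_rpow_of_nonpos (by positivity) (by linarith) (by linarith)
  have hbot : (fun r : ℝ ↦ (1 + r ^ 2) ^ (-b)) =O[𝓝[>] 0] (· ^ (-(0 : ℝ))) := by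
    simpa using (hcont.tendsto 0).isBigO_one ℝ |>.mono nhdsWithin_le_nhds
  exact mellin_convergent_of_isBigO_scalar (hcont.locallyIntegrable.locallyIntegrableOn _) htop
    hcb hbot hc

variable {E : Type*} [NormedAddCommGroup E]

/-- The weight `⟨x⟩ = (1 + ‖x‖ ^ 2) ^ (1 / 2)`, extended nonnegative so that weighted `L^p` norms
need no integrability side conditions. -/
def japaneseBracket (x : E) : ℝ≥0∞ := ENNReal.ofReal √(1 + ‖x‖ ^ 2)

@[fun_prop]
theorem measurable_japaneseBracket [MeasurableSpace E] [OpensMeasurableSpace E] :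
    Measurable (japaneseBracket : E → ℝ≥0∞) := by
  unfold japaneseBracket
  fun_prop

theorem japaneseBracket_rpow (x : E) (t : ℝ) :
    japaneseBracket x ^ t = ENNReal.ofReal ((1 + ‖x‖ ^ 2) ^ (t / 2)) := by
  rw [japaneseBracket, ENNReal.ofReal_rpow_of_pos (by positivity), Real.sqrt_eq_rpow,
    ← Real.rpow_mul (by positivity), one_div_mul_eq_div]

theorem japaneseBracket_rpow_ne_zero (x : E) (t : ℝ) : japaneseBracket x ^ t ≠ 0 := by
  rw [japaneseBracket_rpow, ENNReal.ofReal_ne_zero_iff]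
  positivity

theorem japaneseBracket_rpow_ne_top (x : E) (t : ℝ) : japaneseBracket x ^ t ≠ ∞ :=
  japaneseBracket_rpow x t ▸ ENNReal.ofReal_ne_top

theorem enorm_le_japaneseBracket (x : E) : ‖x‖ₑ ≤ japaneseBracket x := by
  rw [← ofReal_norm]
  exact ENNReal.ofReal_le_ofReal (Real.le_sqrt_of_sq_le (by linarith))

theorem japaneseBracket_add_le (x y : E) :
    japaneseBracket (x + y) ≤ ‖x‖ₑ + japaneseBracket y := by
  rw [japaneseBracket, japaneseBracket, ← ofReal_norm,
    ← ENNReal.ofReal_add (by positivity) (by positivity)]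
  refine ENNReal.ofReal_le_ofReal (Real.sqrt_le_iff.2 ⟨by positivity, ?_⟩)
  have hy : ‖y‖ ≤ √(1 + ‖y‖ ^ 2) := Real.le_sqrt_of_sq_le (by linarith)
  calc 1 + ‖x + y‖ ^ 2
    _ ≤ 1 + (‖x‖ + ‖y‖) ^ 2 := by gcongr; exact norm_add_le x y
    _ = ‖x‖ ^ 2 + 2 * ‖x‖ * ‖y‖ + (1 + ‖y‖ ^ 2) := by ring
    _ ≤ ‖x‖ ^ 2 + 2 * ‖x‖ * √(1 + ‖y‖ ^ 2) + (1 + ‖y‖ ^ 2) := by gcongr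
    _ = (‖x‖ + √(1 + ‖y‖ ^ 2)) ^ 2 := by rw [add_sq, Real.sq_sqrt (by positivity)]

theorem enorm_rpow_le_enorm_mul_japaneseBracket_rpow (x : E) {s : ℝ} (hs : 1 ≤ s) :
    ‖x‖ₑ ^ s ≤ ‖x‖ₑ * japaneseBracket x ^ (s - 1) := by
  calc ‖x‖ₑ ^ s
    _ = ‖x‖ₑ * ‖x‖ₑ ^ (s - 1) := by
      conv_rhs => enter [1]; rw [← ENNReal.rpow_one ‖x‖ₑ]
      rw [← ENNReal.rpow_add_of_nonneg _ _ zero_le_one (by linarith), add_sub_cancel]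
    _ ≤ _ := by
      gcongr
      exact enorm_le_japaneseBracket x

variable [NormedSpace ℝ E] [FiniteDimensional ℝ E] [MeasurableSpace E] [BorelSpace E]
  [Nontrivial E] {μ : Measure E} [μ.IsAddHaarMeasure]

theorem integrable_rpow_norm_mul_rpow_one_add_norm_sq {a b : ℝ} (ha : a < finrank ℝ E)
    (hab : finrank ℝ E < a + 2 * b) :
    Integrable (fun x : E ↦ ‖x‖ ^ (-a) * (1 + ‖x‖ ^ 2) ^ (-b)) μ := by
  refine (integrable_fun_norm_addHaar μ (f := fun r ↦ r ^ (-a) * (1 + r ^ 2) ^ (-b))).2 ?_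
  refine (integrableOn_Ioi_rpow_mul_rpow_one_add_sq (b := b) (sub_pos.2 ha)
    (by linarith)).congr_fun (fun r (hr : 0 < r) ↦ ?_) measurableSet_Ioi
  have hdim : 1 ≤ finrank ℝ E := finrank_pos
  rw [smul_eq_mul, ← mul_assoc, ← Real.rpow_natCast, ← Real.rpow_add hr, Nat.cast_sub hdim]
  push_cast
  ring_nf

theorem eLpNorm_inv_enorm_rpow_mul_japaneseBracket_rpow_ne_top {p : ℝ≥0} {a b : ℝ}
    (ha : p * a < finrank ℝ E) (hab : finrank ℝ E < p * (a + b)) :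
    eLpNorm (fun x : E ↦ (‖x‖ₑ ^ a * japaneseBracket x ^ b)⁻¹) p μ ≠ ∞ := by
  have hp : p ≠ 0 := by
    rintro rfl
    simp only [NNReal.coe_zero, zero_mul] at ha hab
    exact lt_asymm ha hab
  rw [eLpNorm_nnreal_eq_lintegral hp]
  refine ENNReal.rpow_ne_top_of_nonneg (by positivity) ?_
  convert! (integrable_rpow_norm_mul_rpow_one_add_norm_sq (μ := μ) (b := p * b / 2) ha
    (by linarith)).lintegral_lt_top.ne using 1
  refine lintegral_congr_ae ?_
  filter_upwards [Measure.ae_ne μ 0] with x hx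
  have hx' : 0 < ‖x‖ := norm_pos_iff.2 hx
  rw [enorm_eq_self, ENNReal.inv_rpow, ENNReal.mul_rpow_of_nonneg _ _ p.coe_nonneg,
    ← ENNReal.rpow_mul, ← ENNReal.rpow_mul, japaneseBracket_rpow, ← ofReal_norm,
    ENNReal.ofReal_rpow_of_pos hx', ← ENNReal.ofReal_mul (by positivity),
    ← ENNReal.ofReal_inv_of_pos (by positivity), mul_inv, ← Real.rpow_neg (by positivity),
    ← Real.rpow_neg (by positivity)]
  ring_nf

end Weights

section Fourier

variable {E F₁ F₂ F₃ : Type*} [NormedAddCommGroup E] [InnerProductSpace ℝ E]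
  [FiniteDimensional ℝ E] [MeasurableSpace E] [BorelSpace E]
  [NormedAddCommGroup F₁] [NormedSpace ℂ F₁] [NormedAddCommGroup F₂] [NormedSpace ℂ F₂]
  [NormedAddCommGroup F₃] [NormedSpace ℂ F₃] [CompleteSpace F₃]

theorem fourierInv_schwartzConvolution (B : F₁ →L[ℂ] F₂ →L[ℂ] F₃) (f : 𝓢(E, F₁))
    (g : 𝓢(E, F₂)) :
    𝓕⁻ (SchwartzMap.convolution B f g) = pairing B (𝓕⁻ f) (𝓕⁻ g) := by
  ext x
  simp only [fourierInv_coe, Real.fourierInv_eq_fourier_neg, ← fourier_coe, fourier_convolution,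
    pairing_apply_apply]

theorem fourier_pairing [CompleteSpace F₁] [CompleteSpace F₂] (B : F₁ →L[ℂ] F₂ →L[ℂ] F₃)
    (f : 𝓢(E, F₁)) (g : 𝓢(E, F₂)) :
    𝓕 (pairing B f g) = SchwartzMap.convolution B (𝓕 f) (𝓕 g) := by
  have h := fourierInv_schwartzConvolution B (𝓕 f) (𝓕 g)
  simp only [FourierTransform.fourierInv_fourier_eq] at h
  rw [← h, FourierTransform.fourier_fourierInv_eq]

theorem enorm_fourier_pairing_le (f g : 𝓢(E, ℂ)) (ξ : E) :
    ‖𝓕 (pairing (ContinuousLinearMap.mul ℂ ℂ) f g) ξ‖ₑ ≤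
      ((fun η ↦ ‖𝓕 f η‖ₑ) ⋆ₗ fun η ↦ ‖𝓕 g η‖ₑ) ξ := by
  rw [fourier_pairing, SchwartzMap.convolution_apply, convolution_def, lconvolution_def]
  refine (enorm_integral_le_lintegral_enorm _).trans_eq (lintegral_congr fun η ↦ ?_)
  rw [ContinuousLinearMap.mul_apply', enorm_mul, neg_add_eq_sub]

theorem integrable_rpow_one_add_norm_sq_mul_norm_sq (t : ℝ) (f : 𝓢(E, F₁)) :
    Integrable fun x : E ↦ (1 + ‖x‖ ^ 2) ^ t * ‖f x‖ ^ 2 := by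
  have hw : (fun x : E ↦ (((1 + ‖x‖ ^ 2) ^ (t / 2) : ℝ) : ℂ)).HasTemperateGrowth := by fun_prop
  have hmem := (smulLeftCLM F₁ (fun x : E ↦ (((1 + ‖x‖ ^ 2) ^ (t / 2) : ℝ) : ℂ)) f).memLp 2
  refine (memLp_two_iff_integrable_sq_norm hmem.1 |>.1 hmem).congr (.of_forall fun x ↦ ?_)
  simp only [smulLeftCLM_apply_apply hw, norm_smul, mul_pow, Complex.norm_real,
    Real.norm_eq_abs, sq_abs]
  rw [← Real.rpow_mul_natCast (by positivity), Nat.cast_ofNat, div_mul_cancel₀ _ two_ne_zero]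

theorem ofReal_integral_rpow_one_add_norm_sq_mul_norm_sq (t : ℝ) (f : 𝓢(E, F₁)) :
    ENNReal.ofReal (∫ x, (1 + ‖x‖ ^ 2) ^ t * ‖f x‖ ^ 2) =
      ∫⁻ x, (japaneseBracket x ^ t * ‖f x‖ₑ) ^ 2 := by
  rw [ofReal_integral_eq_lintegral_ofReal (integrable_rpow_one_add_norm_sq_mul_norm_sq t f)
    (.of_forall fun x ↦ by positivity)]
  refine lintegral_congr fun x ↦ ?_
  rw [japaneseBracket_rpow, ← ofReal_norm, ← ENNReal.ofReal_mul (by positivity),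
    ← ENNReal.ofReal_pow (by positivity), mul_pow, ← Real.rpow_mul_natCast (by positivity),
    Nat.cast_ofNat, div_mul_cancel₀ _ two_ne_zero]

end Fourier

section Product

variable {E : Type*} [NormedAddCommGroup E] [NormedSpace ℝ E] [FiniteDimensional ℝ E]
  [MeasurableSpace E] [BorelSpace E] {μ : Measure E} [μ.IsAddHaarMeasure]

theorem exists_lintegral_le_mul_eLpNorm_enorm_rpow_mul_japaneseBracket_rpow [Nontrivial E]
    {p q : ℝ≥0} (hpq : p.HolderConjugate q) {a b : ℝ} (ha : p * a < finrank ℝ E)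
    (hab : finrank ℝ E < p * (a + b)) :
    ∃ C ≠ ∞, ∀ f : E → ℝ≥0∞, Measurable f →
      ∫⁻ ξ, f ξ ∂μ ≤ C * eLpNorm (fun ξ ↦ ‖ξ‖ₑ ^ a * japaneseBracket ξ ^ b * f ξ) q μ := by
  refine ⟨_, eLpNorm_inv_enorm_rpow_mul_japaneseBracket_rpow_ne_top ha hab, fun f hf ↦
    lintegral_le_eLpNorm_inv_mul_eLpNorm hpq (by fun_prop) hf ?_ ?_⟩
  all_goals filter_upwards [Measure.ae_ne μ 0] with ξ hξ
  · exact mul_ne_zero (ENNReal.rpow_pos (enorm_pos.2 hξ) enorm_ne_top).ne'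
      (japaneseBracket_rpow_ne_zero ξ b)
  · exact ENNReal.mul_ne_top (ENNReal.rpow_ne_top_of_ne_zero (enorm_ne_zero.2 hξ) enorm_ne_top)
      (japaneseBracket_rpow_ne_top ξ b)

theorem exists_eLpNorm_japaneseBracket_rpow_mul_lconvolution_le {p q : ℝ≥0}
    (hpq : p.HolderConjugate q) {s : ℝ} (hp : p < finrank ℝ E) (hs : finrank ℝ E < p * s) :
    ∃ C ≠ ∞, ∀ f g : E → ℝ≥0∞, Measurable f → Measurable g →
      eLpNorm (fun ξ ↦ japaneseBracket ξ ^ s * (f ⋆ₗ[μ] g) ξ) q μ ≤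
        C * eLpNorm (fun ξ ↦ ‖ξ‖ₑ * japaneseBracket ξ ^ (s - 1) * f ξ) q μ *
          eLpNorm (fun ξ ↦ japaneseBracket ξ ^ s * g ξ) q μ := by
  have hp₀ : (0 : ℝ) < p := mod_cast hpq.pos
  have hp' : (p : ℝ) < finrank ℝ E := mod_cast hp
  have hs₁ : 1 < s := lt_of_mul_lt_mul_left (by linarith) hp₀.le
  have : Nontrivial E := finrank_pos_iff.1 (mod_cast hp₀.trans hp')
  obtain ⟨A, hA, hgA⟩ := exists_lintegral_le_mul_eLpNorm_enorm_rpow_mul_japaneseBracket_rpow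
    (μ := μ) hpq (a := 0) (b := s) (by linarith) (by linarith)
  obtain ⟨B, hB, hfB⟩ := exists_lintegral_le_mul_eLpNorm_enorm_rpow_mul_japaneseBracket_rpow
    (μ := μ) hpq (a := 1) (b := s - 1) (by linarith) (by linarith)
  simp only [ENNReal.rpow_zero, one_mul, ENNReal.rpow_one] at hgA hfB
  refine ⟨2 ^ (s - 1) * (A + B), by finiteness, fun f g hf hg ↦ ?_⟩
  set M := eLpNorm (fun ξ ↦ ‖ξ‖ₑ * japaneseBracket ξ ^ (s - 1) * f ξ) q μ
  set N := eLpNorm (fun ξ ↦ japaneseBracket ξ ^ s * g ξ) q μ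
  have hfM : eLpNorm (fun ξ ↦ ‖ξ‖ₑ ^ s * f ξ) q μ ≤ M :=
    eLpNorm_mono_enorm fun ξ ↦ by
      simp only [enorm_eq_self]
      gcongr
      exact enorm_rpow_le_enorm_mul_japaneseBracket_rpow ξ hs₁.le
  calc eLpNorm (fun ξ ↦ japaneseBracket ξ ^ s * (f ⋆ₗ[μ] g) ξ) q μ
    _ ≤ 2 ^ (s - 1) * ((∫⁻ ξ, g ξ ∂μ) * eLpNorm (fun ξ ↦ ‖ξ‖ₑ ^ s * f ξ) q μ +
          (∫⁻ ξ, f ξ ∂μ) * N) :=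
      eLpNorm_rpow_mul_lconvolution_le hpq.symm.lt.le hs₁.le measurable_enorm
        measurable_japaneseBracket japaneseBracket_add_le hf hg
    _ ≤ 2 ^ (s - 1) * (A * N * M + B * M * N) := by
      gcongr
      exacts [hgA g hg, hfB f hf]
    _ = 2 ^ (s - 1) * (A + B) * M * N := by ring

end Product

section SobolevNorm

variable {d : ℕ}

theorem hNormSq_nonneg (s : ℝ) (u : Euc d → ℂ) : 0 ≤ hNormSq d s u :=
  integral_nonneg fun ξ ↦ by positivity

theorem ofReal_hNormSq (s : ℝ) (u : 𝓢(Euc d, ℂ)) :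
    ENNReal.ofReal (hNormSq d s u) = ∫⁻ ξ, (japaneseBracket ξ ^ s * ‖𝓕 u ξ‖ₑ) ^ 2 := by
  rw [← ofReal_integral_rpow_one_add_norm_sq_mul_norm_sq, hNormSq, fourier_coe]

theorem ofReal_hNorm (s : ℝ) (u : 𝓢(Euc d, ℂ)) :
    ENNReal.ofReal (hNorm d s u) =
      eLpNorm (fun ξ ↦ japaneseBracket ξ ^ s * ‖𝓕 u ξ‖ₑ) 2 :=
  ofReal_sqrt_of_ofReal_eq_sq (by rw [ofReal_hNormSq, eLpNorm_two_sq])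

theorem sum_enorm_apply_sq (ξ : Euc d) : ∑ i, ‖ξ i‖ₑ ^ 2 = ‖ξ‖ₑ ^ 2 := by
  simp only [← ofReal_norm, ← ENNReal.ofReal_pow (norm_nonneg _)]
  rw [← ENNReal.ofReal_sum_of_nonneg fun i _ ↦ by positivity, EuclideanSpace.norm_sq_eq]

theorem enorm_fourier_lineDerivOp_single (i : Fin d) (u : 𝓢(Euc d, ℂ)) (ξ : Euc d) :
    ‖𝓕 (LineDeriv.lineDerivOp (EuclideanSpace.single i (1 : ℝ)) u) ξ‖ₑ =
      ENNReal.ofReal (2 * π) * ‖ξ i‖ₑ * ‖𝓕 u ξ‖ₑ := by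
  have hg : (inner ℝ · (EuclideanSpace.single i (1 : ℝ)) : Euc d → ℝ).HasTemperateGrowth := by
    fun_prop
  rw [fourier_lineDerivOp_eq, smul_apply, smulLeftCLM_apply_apply hg,
    EuclideanSpace.inner_single_right, enorm_smul, enorm_smul,
    ← ofReal_norm (2 * π * Complex.I : ℂ)]
  simp [mul_assoc, abs_of_pos Real.pi_pos]

theorem coe_lineDerivOp_single (i : Fin d) (u : 𝓢(Euc d, ℂ)) :
    ⇑(LineDeriv.lineDerivOp (EuclideanSpace.single i (1 : ℝ)) u) = pd d i u :=
  rfl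

theorem ofReal_hNormSq_pd (t : ℝ) (i : Fin d) (u : 𝓢(Euc d, ℂ)) :
    ENNReal.ofReal (hNormSq d t (pd d i u)) =
      ENNReal.ofReal (2 * π) ^ 2 *
        ∫⁻ ξ, ‖ξ i‖ₑ ^ 2 * (japaneseBracket ξ ^ t * ‖𝓕 u ξ‖ₑ) ^ 2 := by
  rw [← coe_lineDerivOp_single, ofReal_hNormSq, ← lintegral_const_mul _ (by fun_prop)]
  refine lintegral_congr fun ξ ↦ ?_
  rw [enorm_fourier_lineDerivOp_single]
  ring

theorem ofReal_gradHNorm (t : ℝ) (u : 𝓢(Euc d, ℂ)) :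
    ENNReal.ofReal (gradHNorm d t u) = ENNReal.ofReal (2 * π) *
      eLpNorm (fun ξ ↦ ‖ξ‖ₑ * japaneseBracket ξ ^ t * ‖𝓕 u ξ‖ₑ) 2 := by
  refine ofReal_sqrt_of_ofReal_eq_sq ?_
  rw [ENNReal.ofReal_sum_of_nonneg fun i _ ↦ hNormSq_nonneg t (pd d i u), mul_pow,
    eLpNorm_two_sq]
  simp only [ofReal_hNormSq_pd]
  rw [← Finset.mul_sum, ← lintegral_finsetSum _ fun i _ ↦ by fun_prop]
  simp only [← Finset.sum_mul, sum_enorm_apply_sq, mul_pow, mul_assoc]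

end SobolevNorm

theorem statement3_general (d : ℕ) (s : ℝ) (hd : 3 ≤ d) (hs : (d : ℝ) / 2 < s) :
    ∃ K : ℝ, ∀ u₁ u₂ : 𝓢(Euc d, ℂ),
      hNorm d s (fun x => u₁ x * u₂ x) ≤ K * gradHNorm d (s - 1) u₁ * hNorm d s u₂ := by
  have hdim : finrank ℝ (Euc d) = d := finrank_euclideanSpace_fin
  obtain ⟨C, hC, hprod⟩ := exists_eLpNorm_japaneseBracket_rpow_mul_lconvolution_le
    (μ := (volume : Measure (Euc d))) .two_two (s := s) (by rw [hdim]; exact_mod_cast hd)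
    (by rw [hdim]; push_cast; linarith)
  refine ⟨C.toReal / (2 * π), fun u₁ u₂ ↦ ?_⟩
  have hK : ENNReal.ofReal (C.toReal / (2 * π)) * ENNReal.ofReal (2 * π) = C := by
    rw [← ENNReal.ofReal_mul (by positivity), div_mul_cancel₀ _ (by positivity),
      ENNReal.ofReal_toReal hC]
  have hgrad : 0 ≤ gradHNorm d (s - 1) u₁ := Real.sqrt_nonneg _
  have hnorm : 0 ≤ hNorm d s u₂ := Real.sqrt_nonneg _
  rw [← ENNReal.ofReal_le_ofReal_iff (by positivity), ENNReal.ofReal_mul (by positivity),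
    ENNReal.ofReal_mul (by positivity), ofReal_gradHNorm, ofReal_hNorm, ← mul_assoc, hK]
  calc ENNReal.ofReal (hNorm d s (pairing (ContinuousLinearMap.mul ℂ ℂ) u₁ u₂))
    _ ≤ eLpNorm (fun ξ ↦ japaneseBracket ξ ^ s *
          ((fun η ↦ ‖𝓕 u₁ η‖ₑ) ⋆ₗ fun η ↦ ‖𝓕 u₂ η‖ₑ) ξ) 2 := by
      rw [ofReal_hNorm]
      refine eLpNorm_mono_enorm fun ξ ↦ ?_
      simp only [enorm_eq_self]
      gcongr
      exact enorm_fourier_pairing_le u₁ u₂ ξ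
    _ ≤ _ := by
      simpa using hprod (fun η ↦ ‖𝓕 u₁ η‖ₑ) (fun η ↦ ‖𝓕 u₂ η‖ₑ) (by fun_prop) (by fun_prop)

theorem statement3 (d s : ℕ) (hd : 3 ≤ d) (hs : (d : ℝ) / 2 < s) :
    ∃ K : ℝ, ∀ u₁ u₂ : 𝓢(Euc d, ℂ),
      hNorm d s (fun x => u₁ x * u₂ x)
        ≤ K * gradHNorm d ((s : ℝ) - 1) u₁ * hNorm d s u₂ :=
  statement3_general d s hd hs
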